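/- Let f : 𝖱^n → 𝖱 be continuous, let I ⊆ N = {1,…,n} be nonempty, and suppose f is I-cofinal. Then for every c ∈ 𝖱 there exists d̃ ∈ 𝖱 such that for every b ∈ [0,c]^{N∖I}, f(Δ_I(b) ∩ M_I(d̃)) ⊆ [c, ω₁). -/

import Mathlib

noncomputable section
open Set

/-- The first uncountable ordinal `ω₁`. -/
def Omega1 : Ordinal := Ordinal.omega 1

/-- The closed long ray `𝖱`: `ω₁ × [0,1)` with the lexicographic order. -/
def LongRay : Type 1 := {o : Ordinal // o < Omega1} ×ₗ (Set.Ico (0:ℝ) 1)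

instance : LinearOrder LongRay :=
  inferInstanceAs (LinearOrder ({o : Ordinal // o < Omega1} ×ₗ (Set.Ico (0:ℝ) 1)))

/-- `𝖱` carries the order topology. -/
instance : TopologicalSpace LongRay := Preorder.topology LongRay
instance : OrderTopology LongRay := ⟨rfl⟩

lemma omega1_pos : (0 : Ordinal) < Omega1 := Ordinal.omega_pos 1

/-- The point `0 = (0,0)` of the long ray. -/
def rayZero : LongRay := toLex (⟨0, omega1_pos⟩, ⟨0, by simp⟩)

/-- Identification of the countable ordinal `o` with the point `(o,0)` of the long ray
(junk value for `o ≥ ω₁`). -/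
def ordR (o : Ordinal) : LongRay :=
  if h : o < Omega1 then toLex (⟨o, h⟩, ⟨0, by simp⟩) else rayZero

/-- The `I`-diagonal at height `c` (only the values of `c` off `I` are relevant). -/
def Delta (n : ℕ) (I : Finset (Fin n)) (c : Fin n → LongRay) : Set (Fin n → LongRay) :=
  {x | (∀ i ∈ I, ∀ i' ∈ I, x i = x i') ∧ ∀ j ∉ I, x j = c j}

/-- `f` is `I`-cofinal if `f` restricted to `Δ_I = Δ_I(0)` is unbounded. -/
def ICofinal (n : ℕ) (f : (Fin n → LongRay) → LongRay) (I : Finset (Fin n)) : Prop :=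
  ¬ BddAbove (f '' Delta n I (fun _ => rayZero))

/-- The cofinality class `𝔠(f) = {I : f is I-cofinal}`. -/
def cofClass (n : ℕ) (f : (Fin n → LongRay) → LongRay) : Set (Finset (Fin n)) :=
  {I | ICofinal n f I}

/-- `M_I(c) = {x : x_i ≥ c for all i ∈ I}`. -/
def MSet (n : ℕ) (I : Finset (Fin n)) (c : LongRay) : Set (Fin n → LongRay) :=
  {x | ∀ i ∈ I, c ≤ x i}

/-- `E_I(b,d) = {x ∈ M_I(d) : x_j = b_j for all j ∉ I}`. -/
def ESet (n : ℕ) (I : Finset (Fin n)) (b : Fin n → LongRay) (d : LongRay) :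
    Set (Fin n → LongRay) :=
  {x | (∀ i ∈ I, d ≤ x i) ∧ ∀ j ∉ I, x j = b j}

/-!
The long ray has uncountable cofinality, so two closed unbounded subsets of it meet. Hence a
continuous map `h` on it is either bounded or tends to infinity: otherwise `{h ≤ c}` and `{c' ≤ h}`
would be disjoint closed unbounded sets for some `c < c'`.

The restrictions of `f` to the diagonals `Δ_I(b)` with `b ≤ c` form a continuous family of such
maps, whose parameter space is separable and connected. Over a countable dense set of parameters the
bounded members have a common bound `M`, and far out the unbounded ones exceed a common `c' > M`. By
density every member takes its values in `[0, M] ∪ [c', ω₁)` far out. Connectedness then leaves only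
`[c', ω₁)`, since the member at `b = 0` is unbounded.
-/

open Filter TopologicalSpace

section Order

variable {α β : Type*}

lemma countableInterFilter_atTop [Preorder α] [IsDirectedOrder α] [Nonempty α]
    (h : ∀ s : Set α, s.Countable → BddAbove s) : CountableInterFilter (atTop : Filter α) where
  countable_sInter_mem S hS hmem := by
    choose! a ha using fun s (hs : s ∈ S) => mem_atTop_sets.1 (hmem s hs)
    obtain ⟨b, hb⟩ := h _ (hS.image a)
    exact mem_of_superset (Ici_mem_atTop b) fun t ht s hs =>
      ha s hs t ((hb (mem_image_of_mem a hs)).trans ht)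

open scoped Classical in
/-- A linear order with a bottom element in which every set that is bounded above has a least
upper bound, as a conditionally complete linear order; unbounded sets get the junk supremum `⊥`. -/
abbrev conditionallyCompleteLinearOrderOfExistsIsLUB [LinearOrder α] [OrderBot α]
    (h : ∀ s : Set α, BddAbove s → ∃ x, IsLUB s x) : ConditionallyCompleteLinearOrder α :=
  letI : SupSet α := ⟨fun s => if hs : BddAbove s then (h s hs).choose else ⊥⟩
  have isLUB_sSup {s : Set α} (hs : BddAbove s) : IsLUB s (sSup s) := by
    rw [show sSup s = (h s hs).choose from dif_pos hs]
    exact (h s hs).choose_spec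
  have sSup_empty : sSup (∅ : Set α) = ⊥ := (isLUB_sSup bddAbove_empty).unique isLUB_empty
  { ‹LinearOrder α›,
    conditionallyCompleteLatticeOfLatticeOfsSup α fun _ hs _ => isLUB_sSup hs with
    csSup_of_not_bddAbove := fun _ hs => (dif_neg hs).trans sSup_empty.symm
    csInf_of_not_bddBelow := fun s hs => (hs (OrderBot.bddBelow s)).elim }

/-- The least upper bound has the least first coordinate `a` among all upper bounds and the least
second coordinate among the upper bounds starting with `a`. -/
lemma exists_isLUB_lex [LinearOrder α] [WellFoundedLT α] [ConditionallyCompleteLinearOrder β]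
    [OrderBot β] {s : Set (α ×ₗ β)} (hs : BddAbove s) : ∃ x, IsLUB s x := by
  obtain ⟨a, ⟨u, hu, rfl⟩, ha⟩ :=
    WellFounded.has_min wellFounded_lt ((fun x => (ofLex x).1) '' upperBounds s) (hs.image _)
  let T : Set β := {b | toLex ((ofLex u).1, b) ∈ upperBounds s}
  refine ⟨toLex ((ofLex u).1, sInf T), fun x hx => ?_, fun y hy => ?_⟩
  · refine Prod.Lex.le_iff'.2 ⟨Prod.Lex.monotone_fst x u (hu hx), fun h => ?_⟩
    exact le_csInf ⟨(ofLex u).2, hu⟩ fun b hb => (Prod.Lex.le_iff'.1 (hb hx)).2 h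
  · refine Prod.Lex.le_iff'.2 ⟨not_lt.1 (ha _ ⟨y, hy, rfl⟩), fun h => ?_⟩
    have hyT : toLex ((ofLex u).1, (ofLex y).2) = y := congrArg toLex (Prod.ext h rfl)
    exact csInf_le (OrderBot.bddBelow T) (show _ ∈ upperBounds s from hyT ▸ hy)

lemma exists_mem_between_lex [LinearOrder α] [LinearOrder β] [TopologicalSpace β]
    [OrderTopology β] [DenselyOrdered β] [NoMaxOrder β] {D : Set β} (hD : Dense D)
    {x y : α ×ₗ β} (h : x < y) :
    ∃ b ∈ D, x < toLex ((ofLex x).1, b) ∧ toLex ((ofLex x).1, b) < y := by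
  rcases Prod.Lex.lt_iff.1 h with h₁ | ⟨h₁, h₂⟩
  · obtain ⟨b, hb, hxb⟩ := hD.exists_gt (ofLex x).2
    exact ⟨b, hb, Prod.Lex.lt_iff.2 (.inr ⟨rfl, hxb⟩), Prod.Lex.lt_iff.2 (.inl h₁)⟩
  · obtain ⟨b, hb, hxb, hby⟩ := hD.exists_between h₂
    exact ⟨b, hb, Prod.Lex.lt_iff.2 (.inr ⟨rfl, hxb⟩), Prod.Lex.lt_iff.2 (.inr ⟨h₁, hby⟩)⟩

lemma frequently_atTop_le_of_not_bddAbove [LinearOrder α] [OrderBot α] [TopologicalSpace α]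
    [CompactIccSpace α] [LinearOrder β] [TopologicalSpace β] [ClosedIciTopology β] {h : α → β}
    (hh : Continuous h) (hunb : ¬ BddAbove (range h)) (c : β) :
    ∃ᶠ t in atTop, c ≤ h t := by
  have : Nonempty β := ⟨c⟩
  refine frequently_atTop.2 fun z => ?_
  by_contra! hz
  obtain ⟨m, hm⟩ := (isCompact_Icc (a := ⊥) (b := z)).bddAbove_image hh.continuousOn
  refine hunb ⟨max m c, forall_mem_range.2 fun t => ?_⟩
  rcases le_total t z with htz | hzt
  · exact le_max_of_le_left (hm (mem_image_of_mem h ⟨bot_le, htz⟩))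
  · exact le_max_of_le_right (hz t hzt).le

end Order

section UncountableCofinality

variable {α β X ι : Type*} [ConditionallyCompleteLinearOrder α] [TopologicalSpace α]
  [OrderTopology α] [CountableInterFilter (atTop : Filter α)]

/-- Interleaving `A` and `B` gives a sequence whose supremum lies in both. -/
lemma inter_nonempty_of_isClosed_of_frequently_atTop {A B : Set α} (hA : IsClosed A)
    (hB : IsClosed B) (hAtop : ∃ᶠ t in atTop, t ∈ A) (hBtop : ∃ᶠ t in atTop, t ∈ B) :
    (A ∩ B).Nonempty := by
  have : Nonempty α := ⟨sSup ∅⟩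
  choose a hle_a ha using frequently_atTop.1 hAtop
  choose b hle_b hb using frequently_atTop.1 hBtop
  let u : ℕ → α := fun k => (b ∘ a)^[k] (sSup ∅)
  have hu_succ (k : ℕ) : u (k + 1) = b (a (u k)) := Function.iterate_succ_apply' _ _ _
  have ha_le (k : ℕ) : a (u k) ≤ u (k + 1) := hu_succ k ▸ hle_b _
  have hu_mono : Monotone u := monotone_nat_of_le_succ fun k => (hle_a _).trans (ha_le k)
  have hu_bdd : BddAbove (range u) := by
    obtain ⟨z, hz⟩ := (eventually_countable_forall.2 fun k => eventually_ge_atTop (u k)).exists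
    exact ⟨z, forall_mem_range.2 hz⟩
  have hu'B (k : ℕ) : u (k + 1) ∈ B := hu_succ k ▸ hb _
  have hu := tendsto_atTop_ciSup hu_mono hu_bdd
  have hu' := hu.comp (tendsto_add_atTop_nat 1)
  have hau := tendsto_of_tendsto_of_tendsto_of_le_of_le hu hu' (fun k => hle_a (u k)) ha_le
  exact ⟨_, hA.mem_of_tendsto hau (.of_forall fun k => ha _),
    hB.mem_of_tendsto hu' (.of_forall hu'B)⟩

variable [OrderBot α] [LinearOrder β] [TopologicalSpace β] [OrderClosedTopology β]

lemma tendsto_atTop_atTop_of_not_bddAbove {h : α → β} (hh : Continuous h)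
    (hunb : ¬ BddAbove (range h)) : Tendsto h atTop atTop := by
  refine tendsto_atTop.2 fun c => ?_
  by_contra hc
  have hc_freq : ∃ᶠ t in atTop, h t ≤ c := (not_eventually.1 hc).mono fun t ht => (not_le.1 ht).le
  obtain ⟨c', -, hcc'⟩ := not_bddAbove_iff.1 hunb c
  obtain ⟨t, htc, htc'⟩ := inter_nonempty_of_isClosed_of_frequently_atTop
    (isClosed_le hh continuous_const) (isClosed_le continuous_const hh) hc_freq
    (frequently_atTop_le_of_not_bddAbove hh hunb c')
  exact (hcc'.trans_le htc').not_ge htc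

variable [CountableInterFilter (atTop : Filter β)]

lemma eventually_forall_le_of_not_bddAbove [TopologicalSpace X] [SeparableSpace X]
    [PreconnectedSpace X] {g : X → α → β} (hg : ∀ x, Continuous (g x))
    (hg' : ∀ t, Continuous fun x => g x t) {x₀ : X} (hunb : ¬ BddAbove (range (g x₀))) (c : β) :
    ∀ᶠ t in atTop, ∀ x, c ≤ g x t := by
  have : Nonempty β := ⟨c⟩
  obtain ⟨D, hD, hD_dense⟩ := exists_countable_dense X
  obtain ⟨M, hM⟩ : ∃ M, ∀ x ∈ D, BddAbove (range (g x)) → ∀ t, g x t ≤ M := by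
    refine ((eventually_countable_ball (l := atTop) hD).2 fun x _ => ?_).exists
    refine eventually_imp_distrib_left.2 fun ⟨m, hm⟩ => ?_
    exact (eventually_ge_atTop m).mono fun M hmM t => (hm (mem_range_self t)).trans hmM
  obtain ⟨c', -, hc'⟩ := not_bddAbove_iff.1 hunb (max M c)
  have hlarge : ∀ᶠ t in atTop, ∀ x ∈ D, ¬ BddAbove (range (g x)) → c' ≤ g x t :=
    (eventually_countable_ball hD).2 fun x _ => eventually_imp_distrib_left.2 fun hx =>
      (tendsto_atTop_atTop_of_not_bddAbove (hg x) hx).eventually_ge_atTop c'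
  have hlarge₀ : ∀ᶠ t in atTop, c' ≤ g x₀ t :=
    (tendsto_atTop_atTop_of_not_bddAbove (hg x₀) hunb).eventually_ge_atTop c'
  filter_upwards [hlarge, hlarge₀] with t ht ht₀ x
  have hcover (y : X) : g y t ∈ Iic M ∪ Ici c' := by
    refine hD_dense.induction (fun y hy => ?_)
      ((isClosed_Iic.union isClosed_Ici).preimage (hg' t)) y
    exact (em (BddAbove (range (g y)))).imp (fun hb => hM y hy hb t) (ht y hy)
  have hdisj : Disjoint (Iic M) (Ici c') :=
    Iic_disjoint_Ici.2 ((le_max_left M c).trans_lt hc').not_ge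
  have hx := isPreconnected_iff_subset_of_disjoint_closed.1 (isPreconnected_range (hg' t))
    _ _ isClosed_Iic isClosed_Ici (range_subset_iff.2 hcover) (by simp [hdisj.inter_eq])
  rcases hx with hx | hx
  · exact (hdisj.notMem_of_mem_right ht₀ (hx (mem_range_self x₀))).elim
  · exact ((le_max_right M c).trans hc'.le).trans (hx (mem_range_self x))

lemma eventually_forall_le_piecewise [DenselyOrdered α] [Countable ι] {f : (ι → α) → β}
    (hf : Continuous f) (I : Finset ι) [∀ i, Decidable (i ∈ I)]
    (hunb : ¬ BddAbove (range fun t => f (I.piecewise (fun _ => t) fun _ => ⊥))) (a : α)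
    [SeparableSpace (Iic a)] (c : β) :
    ∀ᶠ t in atTop, ∀ b : ι → Iic a, c ≤ f (I.piecewise (fun _ => t) fun i => b i) := by
  have : PreconnectedSpace (Iic a) := Subtype.preconnectedSpace isPreconnected_Iic
  have hpiecewise : Continuous fun p : (ι → Iic a) × α =>
      I.piecewise (fun _ => p.2) fun i => (p.1 i : α) :=
    continuous_pi fun i => .if_const _ continuous_snd (by fun_prop)
  exact eventually_forall_le_of_not_bddAbove (x₀ := ⊥)
    (g := fun (b : ι → Iic a) t => f (I.piecewise (fun _ => t) fun i => b i))
    (fun b => hf.comp (hpiecewise.comp (.prodMk_right b)))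
    (fun t => hf.comp (hpiecewise.comp (.prodMk_left t))) hunb c

end UncountableCofinality

lemma countable_Iic_of_lt_omega1 {o : Ordinal} (ho : o < Omega1) : (Iic o).Countable := by
  rw [← Iio_insert, countable_insert, ← Cardinal.le_aleph0_iff_set_countable,
    Cardinal.mk_Iio_ordinal, Cardinal.lift_le_aleph0, ← Order.lt_succ_iff, Cardinal.succ_aleph0,
    ← Cardinal.lt_ord, Cardinal.ord_aleph]
  exact ho

namespace LongRay

instance : OrderBot LongRay where
  bot := rayZero
  bot_le x := Prod.Lex.toLex_mono (b := ofLex x) ⟨(zero_le : 0 ≤ (ofLex x).1.1), (ofLex x).2.2.1⟩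

instance : DenselyOrdered LongRay :=
  inferInstanceAs (DenselyOrdered ({o : Ordinal // o < Omega1} ×ₗ Ico (0 : ℝ) 1))

/-- A complete order on the long ray. It is not an instance so that the order of `LongRay` keeps
being found along a single path. -/
abbrev conditionallyCompleteLinearOrder : ConditionallyCompleteLinearOrder LongRay :=
  letI : Inhabited (Ico (0 : ℝ) 1) := ⟨⊥⟩
  conditionallyCompleteLinearOrderOfExistsIsLUB fun _ =>
    exists_isLUB_lex (α := {o : Ordinal // o < Omega1}) (β := Ico (0 : ℝ) 1)

lemma bddAbove_of_countable {s : Set LongRay} (hs : s.Countable) : BddAbove s := by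
  have := hs.to_subtype
  have hsup : ⨆ x : s, ((ofLex x.1).1 : Ordinal) < Omega1 :=
    Ordinal.iSup_lt_omega_one fun x => (ofLex x.1).1.2
  refine ⟨toLex (⟨_, (Cardinal.isSuccLimit_omega 1).succ_lt hsup⟩, ⊥), fun x hx => ?_⟩
  exact Prod.Lex.le_iff.2 (.inl (Subtype.coe_lt_coe.1 (Order.lt_succ_of_le
    (Ordinal.le_iSup (fun x : s => ((ofLex x.1).1 : Ordinal)) ⟨x, hx⟩))))

instance : CountableInterFilter (atTop : Filter LongRay) :=
  countableInterFilter_atTop fun _ => bddAbove_of_countable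

instance (c : LongRay) : SeparableSpace (Iic c) := by
  rcases subsingleton_or_nontrivial (Iic c) with _ | _
  · infer_instance
  obtain ⟨D, hD, hD_dense⟩ := exists_countable_dense (Ico (0 : ℝ) 1)
  have hc : (Iic (ofLex c).1).Countable :=
    (countable_Iic_of_lt_omega1 (ofLex c).1.2).preimage Subtype.val_injective
  have hS : ((fun p => toLex p : _ → LongRay) '' (Iic (ofLex c).1 ×ˢ D)).Countable :=
    (hc.prod hD).image _
  refine ⟨_, hS.preimage Subtype.val_injective, dense_of_exists_between fun x y hxy => ?_⟩
  obtain ⟨q, hq, hxq, hqy⟩ := exists_mem_between_lex hD_dense hxy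
  exact ⟨⟨_, hqy.le.trans y.2⟩, ⟨(_, q), ⟨Prod.Lex.monotone_fst _ _ x.2, hq⟩, rfl⟩, hxq, hqy⟩

end LongRay

lemma delta_eq_range {n : ℕ} {I : Finset (Fin n)} (hI : I.Nonempty) (c : Fin n → LongRay) :
    Delta n I c = range fun t => I.piecewise (fun _ => t) c := by
  obtain ⟨i, hi⟩ := hI
  ext x
  constructor
  · rintro ⟨hxI, hxc⟩
    refine ⟨x i, funext fun j => ?_⟩
    by_cases hj : j ∈ I
    · simpa [hj] using hxI i hi j hj
    · simpa [hj] using (hxc j hj).symm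
  · rintro ⟨t, rfl⟩
    exact ⟨fun j hj k hk => by simp [hj, hk], fun j hj => by simp [hj]⟩

/-- if `f` is `I`-cofinal then for every `c` there is `d̃` such that for
every `b ∈ [0,c]^{N∖I}`, `f(Δ_I(b) ∩ M_I(d̃)) ⊆ [c, ω₁)`. -/
theorem cofinal_direction_large (n : ℕ) (f : (Fin n → LongRay) → LongRay)
    (hf : Continuous f) (I : Finset (Fin n)) (hI : I.Nonempty)
    (hcof : ICofinal n f I) :
    ∀ c : LongRay, ∃ d : LongRay, ∀ b : Fin n → LongRay, (∀ j ∉ I, b j ≤ c) →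
      ∀ x ∈ Delta n I b ∩ MSet n I d, c ≤ f x := by
  intro c
  have hunb : ¬ BddAbove (range fun t => f (I.piecewise (fun _ => t) fun _ => rayZero)) := by
    rwa [ICofinal, delta_eq_range hI, ← range_comp] at hcof
  let := LongRay.conditionallyCompleteLinearOrder
  obtain ⟨d, hd⟩ := eventually_atTop.1 (eventually_forall_le_piecewise hf I hunb c c)
  refine ⟨d, fun b hb x ⟨hxΔ, hxM⟩ => ?_⟩
  obtain ⟨t, rfl⟩ := (delta_eq_range hI b).subset hxΔ
  have hdt : d ≤ t := by
    obtain ⟨i, hi⟩ := hI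
    simpa [hi] using hxM i hi
  have hproj : I.piecewise (fun _ => t) (fun j => (projIic c (b j) : LongRay)) =
      I.piecewise (fun _ => t) b :=
    I.piecewise_congr (fun _ _ => rfl) fun j hj => by rw [projIic_of_mem (hb j hj)]
  simpa only [hproj] using hd t hdt fun j => projIic c (b j)
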